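/- (Generalized Rolle's theorem.) Let f : [a,b] → ℝ be continuous with f(a) = f(b) = 0, and suppose that at every x ∈ (a,b] the left derivative f⁻(x) = lim_{h→0⁺} (f(x) − f(x−h))/h exists. Then there exist c, d ∈ (a,b] such that f⁻(c) ≤ 0 ≤ f⁻(d). -/

import Mathlib

open Filter

/-!
On `[a, b]` a maximum and a minimum of `f` can both be placed away from the left endpoint, since
`f a = f b` lets an extremum at `a` be traded for one at `b`. At a maximum the difference quotients
from the left are nonnegative, at a minimum nonpositive, and these signs pass to the limit.
-/

open Set Topology

lemma exists_mem_Ioc_isMaxOn_Icc {X Y : Type*} [PartialOrder X] [TopologicalSpace X]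
    [CompactIccSpace X] [LinearOrder Y] {a b : X} {f : X → Y} (hab : a < b)
    (hf : UpperSemicontinuousOn f (Icc a b)) (hfab : f a ≤ f b) :
    ∃ c ∈ Ioc a b, IsMaxOn f (Icc a b) c := by
  obtain ⟨c, hc, hmax⟩ := hf.exists_isMaxOn (nonempty_Icc.2 hab.le) isCompact_Icc
  rcases hc.1.eq_or_lt with rfl | hac
  · exact ⟨b, right_mem_Ioc.2 hab, fun y hy => (hmax hy).trans hfab⟩
  · exact ⟨c, ⟨hac, hc.2⟩, hmax⟩

lemma hasDerivWithinAt_Iio_iff_tendsto_nhdsGT_zero {F : Type*} [NormedAddCommGroup F]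
    [NormedSpace ℝ F] {f : ℝ → F} {f' : F} {x : ℝ} :
    HasDerivWithinAt f f' (Iio x) x ↔
      Tendsto (fun h => h⁻¹ • (f x - f (x - h))) (𝓝[>] 0) (𝓝 f') := by
  have hmap : 𝓝[<] x = map (x - ·) (𝓝[>] 0) := by
    rw [map_subLeft_nhdsGT, sub_zero]
  have hslope (h : ℝ) : slope f x (x - h) = h⁻¹ • (f x - f (x - h)) := by
    rw [slope_comm, slope_def_module, sub_sub_cancel]
  simp only [hasDerivWithinAt_iff_tendsto_slope' self_notMem_Iio, hmap, tendsto_map'_iff,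
    Function.comp_def, hslope]

lemma neg_one_mem_posTangentConeAt_Iio (x : ℝ) : -1 ∈ posTangentConeAt (Iio x) x := by
  refine mem_posTangentConeAt_of_frequently_mem (Eventually.frequently ?_)
  filter_upwards [self_mem_nhdsWithin] with t ht
  simpa using ht

lemma nonneg_of_isLocalMaxOn_Iio_of_hasDerivWithinAt {f : ℝ → ℝ} {f' x : ℝ}
    (hmax : IsLocalMaxOn f (Iio x) x) (hf : HasDerivWithinAt f f' (Iio x) x) : 0 ≤ f' := by
  simpa using hmax.hasFDerivWithinAt_nonpos hf.hasFDerivWithinAt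
    (neg_one_mem_posTangentConeAt_Iio x)

section Rolle

variable {f f' : ℝ → ℝ} {a b : ℝ}

lemma exists_nonneg_of_hasDerivWithinAt_Iio (hab : a < b)
    (hf : UpperSemicontinuousOn f (Icc a b)) (hfab : f a ≤ f b)
    (hf' : ∀ x ∈ Ioc a b, HasDerivWithinAt f (f' x) (Iio x) x) :
    ∃ c ∈ Ioc a b, 0 ≤ f' c := by
  obtain ⟨c, hc, hmax⟩ := exists_mem_Ioc_isMaxOn_Icc hab hf hfab
  have hlocal : IsLocalMaxOn f (Iio c) c := by
    filter_upwards [Ioo_mem_nhdsLT hc.1] with y hy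
    exact hmax ⟨hy.1.le, hy.2.le.trans hc.2⟩
  exact ⟨c, hc, nonneg_of_isLocalMaxOn_Iio_of_hasDerivWithinAt hlocal (hf' c hc)⟩

lemma exists_nonpos_of_hasDerivWithinAt_Iio (hab : a < b)
    (hf : LowerSemicontinuousOn f (Icc a b)) (hfba : f b ≤ f a)
    (hf' : ∀ x ∈ Ioc a b, HasDerivWithinAt f (f' x) (Iio x) x) :
    ∃ c ∈ Ioc a b, f' c ≤ 0 := by
  obtain ⟨c, hc, hneg⟩ := exists_nonneg_of_hasDerivWithinAt_Iio (f := -f) (f' := -f') hab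
    hf.neg (neg_le_neg hfba) fun x hx => (hf' x hx).neg
  exact ⟨c, hc, neg_nonneg.1 hneg⟩

theorem rolle_left_deriv_general (hab : a < b) (hf : ContinuousOn f (Icc a b)) (hfab : f a = f b)
    (hf' : ∀ x ∈ Ioc a b, HasDerivWithinAt f (f' x) (Iio x) x) :
    ∃ c ∈ Ioc a b, ∃ d ∈ Ioc a b, f' c ≤ 0 ∧ 0 ≤ f' d := by
  obtain ⟨c, hc, hc'⟩ :=
    exists_nonpos_of_hasDerivWithinAt_Iio hab hf.lowerSemicontinuousOn hfab.ge hf'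
  obtain ⟨d, hd, hd'⟩ :=
    exists_nonneg_of_hasDerivWithinAt_Iio hab hf.upperSemicontinuousOn hfab.le hf'
  exact ⟨c, hc, d, hd, hc', hd'⟩

end Rolle

/-- **generalized Rolle's theorem.** Let `f : [a,b] → ℝ` be continuous with
`f a = f b = 0`, admitting at every `x ∈ (a,b]` a left derivative
`f⁻(x) = lim_{h→0⁺} (f x - f (x - h))/h`.  Then there are `c, d ∈ (a,b]` with
`f⁻(c) ≤ 0 ≤ f⁻(d)`. -/
theorem rolle_left_deriv (a b : ℝ) (hab : a < b) (f : ℝ → ℝ) (f' : ℝ → ℝ)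
    (hcont : ContinuousOn f (Set.Icc a b)) (ha : f a = 0) (hb : f b = 0)
    (hder : ∀ x ∈ Set.Ioc a b,
      Tendsto (fun h => (f x - f (x - h)) / h) (nhdsWithin 0 (Set.Ioi 0)) (nhds (f' x))) :
    ∃ c ∈ Set.Ioc a b, ∃ d ∈ Set.Ioc a b, f' c ≤ 0 ∧ 0 ≤ f' d :=
  rolle_left_deriv_general hab hcont (ha.trans hb.symm) fun x hx =>
    hasDerivWithinAt_Iio_iff_tendsto_nhdsGT_zero.2 <| by
      simpa only [smul_eq_mul, div_eq_inv_mul] using hder x hx
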